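/- Let G = ℤ^{n+1} and let 𝔤 = {G = G_0 ⊇ G_1 ⊇ G_2 ⊇ ⋯} be a tower of subgroups, each of finite index in G. Assume ρ(𝔤) = n+1. Then there exist sequences of positive integers (a_k) and (b_k) with a_k → ∞ and b_k → ∞ as k → ∞, such that a_k·G ⊇ G_k ⊇ b_k·G for every k. -/

import Mathlib

noncomputable section

/-- The minimal number of generators of an additive group. -/
def mgen (H : Type) [AddGroup H] : ℕ :=
  sInf {d : ℕ | ∃ S : Finset H, S.card = d ∧ AddSubgroup.closure (S : Set H) = ⊤}

/-- `r(𝔤^{[i]})`: the maximum over `j` of the minimal number of generators of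
`G_i / G_{i+j}`, for a tower `𝔤 = {G_0 ⊇ G_1 ⊇ ⋯}`. -/
def towerR {m : ℕ} (G : ℕ → AddSubgroup (Fin m → ℤ)) (i : ℕ) : ℕ :=
  sSup {d : ℕ | ∃ j : ℕ, d = mgen (↥(G i) ⧸ ((G (i + j)).addSubgroupOf (G i)))}

/-- `ρ(𝔤)`: the limit of the non-increasing sequence `r(𝔤^{[i]})`. -/
def towerRho {m : ℕ} (G : ℕ → AddSubgroup (Fin m → ℤ)) : ℕ :=
  sInf (Set.range (towerR G))

/-- The subgroup `a·G` of all `a`-th multiples of elements of `G = ℤᵐ`. -/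
def mulSub (m : ℕ) (a : ℕ) : AddSubgroup (Fin m → ℤ) :=
  AddSubgroup.map (DistribMulAction.toAddMonoidHom (Fin m → ℤ) (a : ℤ)) ⊤

/-!
The heart of the matter is the first step of the Smith normal form: over a principal ideal ring the
values of a bilinear map have a common divisor which is itself a value. Applied to the pairing
between `L*` and a submodule `K` of a free module `L`, it gives `φ ∈ L*` and `y ∈ K` such that `φ y`
divides all coordinates of all elements of `K`. If `φ y` is a unit then `L = R·y ⊕ ker φ`, so
`L ⧸ K` needs fewer generators than `L`; otherwise `K ⊆ φ y · L`. Hence `ρ(𝔤) = n + 1` yields, for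
every `i`, a prime `p` and a `k` with `G_k ⊆ p·G_i`. Iterating, the largest `a_k` with
`G_k ⊆ a_k·G` is unbounded; as `a_k` divides the index of `G_k`, the choice `b_k = [G : G_k]` works.
-/

open scoped Pointwise

section PrincipalIdealRing

variable {R : Type*} [CommRing R] [IsPrincipalIdealRing R]

theorem exists_bilin_apply_dvd_bilin_apply {M N : Type*} [AddCommGroup M] [Module R M]
    [AddCommGroup N] [Module R N] (B : M →ₗ[R] N →ₗ[R] R) :
    ∃ x₀ y₀, ∀ x y, B x₀ y₀ ∣ B x y := by
  obtain ⟨_, ⟨⟨x₀, y₀⟩, rfl⟩, hspan⟩ := set_has_maximal_iff_noetherian.mpr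
    (inferInstance : IsNoetherian R R)
    (Set.range fun p : M × N => Ideal.span {B p.1 p.2}) (Set.range_nonempty _)
  have hmax : ∀ x y, B x y ∣ B x₀ y₀ → B x₀ y₀ ∣ B x y := fun x y hdvd => by
    have hle := Ideal.span_singleton_le_span_singleton.mpr hdvd
    exact Ideal.span_singleton_le_span_singleton.mp
      (not_lt_iff_le_imp_ge.mp (hspan _ ⟨(x, y), rfl⟩) hle)
  have hleft : ∀ x, B x₀ y₀ ∣ B x y₀ := fun x => by
    obtain ⟨p, q, hpq⟩ := IsBezout.gcd_eq_sum (B x₀ y₀) (B x y₀)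
    have hgcd : B (p • x₀ + q • x) y₀ = IsBezout.gcd (B x₀ y₀) (B x y₀) := by simp [hpq]
    exact (hmax _ _ (hgcd ▸ IsBezout.gcd_dvd_left _ _)).trans (hgcd ▸ IsBezout.gcd_dvd_right _ _)
  have hright : ∀ x, B x y₀ = B x₀ y₀ → ∀ y, B x₀ y₀ ∣ B x y := fun x hx y => by
    obtain ⟨p, q, hpq⟩ := IsBezout.gcd_eq_sum (B x y₀) (B x y)
    have hgcd : B x (p • y₀ + q • y) = IsBezout.gcd (B x y₀) (B x y) := by simp [hpq]
    have hdvd : B x (p • y₀ + q • y) ∣ B x y₀ := hgcd ▸ IsBezout.gcd_dvd_left _ _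
    exact (hmax _ _ (hx ▸ hdvd)).trans (hgcd ▸ IsBezout.gcd_dvd_right _ _)
  refine ⟨x₀, y₀, fun x y => ?_⟩
  obtain ⟨c, hc⟩ := hleft x
  -- `B · y₀` kills `x - c • x₀`, so adding it to `x₀` preserves the minimal value `B x₀ y₀`.
  have hshear : B (x₀ + (x - c • x₀)) y₀ = B x₀ y₀ := by simp [hc, mul_comm]
  have hsplit : B x y = B (x₀ + (x - c • x₀)) y - (1 - c) * B x₀ y := by simp; ring
  rw [hsplit]
  exact dvd_sub (hright _ hshear y) ((hright x₀ rfl y).mul_left _)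

end PrincipalIdealRing

theorem exists_smul_eq_of_forall_dvd_dual {R L : Type*} [CommRing R] [AddCommGroup L] [Module R L]
    [Module.Free R L] {a : R} {x : L} (h : ∀ ψ : Module.Dual R L, a ∣ ψ x) : ∃ z, a • z = x := by
  let b := Module.Free.chooseBasis R L
  choose c hc using fun i => h (b.coord i)
  refine ⟨∑ i ∈ (b.repr x).support, c i • b i, ?_⟩
  calc a • ∑ i ∈ (b.repr x).support, c i • b i
      = ∑ i ∈ (b.repr x).support, b.repr x i • b i := by
        simp only [Finset.smul_sum, smul_smul, ← hc, Module.Basis.coord_apply]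
    _ = x := b.linearCombination_repr x

section PID

variable {R L Q : Type*} [CommRing R] [IsDomain R] [IsPrincipalIdealRing R]
  [AddCommGroup L] [Module R L] [Module.Free R L] [Module.Finite R L]
  [AddCommGroup Q] [Module R Q] {f : L →ₗ[R] Q}

theorem spanFinrank_lt_finrank_of_dual_apply_eq_one (hf : Function.Surjective f)
    {φ : Module.Dual R L} {y : L} (hy : y ∈ f.ker) (hφy : φ y = 1) :
    (⊤ : Submodule R Q).spanFinrank < Module.finrank R L := by
  have hmap : φ.ker.map f = ⊤ := by
    refine Submodule.eq_top_iff'.mpr fun q => ?_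
    obtain ⟨x, rfl⟩ := hf q
    exact ⟨x - φ x • y, by simp [hφy], by simp [LinearMap.mem_ker.mp hy]⟩
  have hsurj : Function.Surjective φ := fun c => ⟨c • y, by simp [hφy]⟩
  have hrank := φ.ker.finrank_quotient_add_finrank
  rw [(φ.quotKerEquivOfSurjective hsurj).finrank_eq, Module.finrank_self] at hrank
  calc (⊤ : Submodule R Q).spanFinrank
      ≤ φ.ker.spanFinrank := hmap ▸ Submodule.spanFinrank_map_le_of_fg f (IsNoetherian.noetherian _)
    _ = Module.finrank R φ.ker := by
        rw [Module.finrank_eq_spanFinrank_of_free, Submodule.spanFinrank_top]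
    _ < Module.finrank R L := by lia

theorem exists_not_isUnit_forall_mem_ker_exists_smul_eq (hf : Function.Surjective f)
    (hrank : Module.finrank R L ≤ (⊤ : Submodule R Q).spanFinrank) :
    ∃ a : R, ¬IsUnit a ∧ ∀ x ∈ f.ker, ∃ z, a • z = x := by
  obtain ⟨⟨y, hy⟩, φ, hdvd⟩ :=
    exists_bilin_apply_dvd_bilin_apply (Module.Dual.eval R L ∘ₗ f.ker.subtype)
  refine ⟨φ y, fun hunit => ?_, fun x hx =>
    exists_smul_eq_of_forall_dvd_dual fun ψ => hdvd ⟨x, hx⟩ ψ⟩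
  obtain ⟨c, hc⟩ := hunit.exists_left_inv
  exact (spanFinrank_lt_finrank_of_dual_apply_eq_one (φ := c • φ) hf hy hc).not_ge hrank

end PID

theorem mgen_le_spanFinrank (H : Type) [AddCommGroup H] [Module.Finite ℤ H] :
    mgen H ≤ (⊤ : Submodule ℤ H).spanFinrank := by
  obtain ⟨S, hcard, hspan⟩ :=
    (Module.Finite.fg_top : (⊤ : Submodule ℤ H).FG).exists_span_finset_card_eq_spanFinrank
  refine Nat.sInf_le ⟨S, hcard, ?_⟩
  rw [← Submodule.span_int_eq_addSubgroupClosure, hspan, Submodule.top_toAddSubgroup]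

theorem exists_prime_le_smul_of_finrank_le_mgen {L : Type} [AddCommGroup L] [Module.Free ℤ L]
    [Module.Finite ℤ L] {H K : AddSubgroup L} (hKH : K ≤ H)
    (hgen : Module.finrank ℤ L ≤ mgen (H ⧸ K.addSubgroupOf H)) :
    ∃ p : ℕ, p.Prime ∧ K ≤ (p : ℤ) • H := by
  have : Module.Free ℤ H := inferInstanceAs (Module.Free ℤ H.toIntSubmodule)
  have : Module.Finite ℤ H := inferInstanceAs (Module.Finite ℤ H.toIntSubmodule)
  let π : H →ₗ[ℤ] H ⧸ K.addSubgroupOf H :=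
    (QuotientAddGroup.mk' (K.addSubgroupOf H)).toIntLinearMap
  have hπ : Function.Surjective π := QuotientAddGroup.mk'_surjective _
  have : Module.Finite ℤ (H ⧸ K.addSubgroupOf H) := Module.Finite.of_surjective π hπ
  have hrank : Module.finrank ℤ H ≤ Module.finrank ℤ L := H.toIntSubmodule.finrank_le
  obtain ⟨a, ha, hdiv⟩ := exists_not_isUnit_forall_mem_ker_exists_smul_eq hπ
    ((hrank.trans hgen).trans (mgen_le_spanFinrank _))
  obtain ⟨p, hp, hpa⟩ := Nat.exists_prime_and_dvd (mt Int.isUnit_iff_natAbs_eq.mpr ha)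
  obtain ⟨c, rfl⟩ := Int.natCast_dvd.mpr hpa
  refine ⟨p, hp, fun x hx => ?_⟩
  obtain ⟨z, hz⟩ := hdiv ⟨x, hKH hx⟩ ((QuotientAddGroup.eq_zero_iff _).mpr hx)
  refine (AddSubgroup.mem_smul_pointwise_iff_exists ..).mpr ⟨c • z, (c • z).2, ?_⟩
  simpa [smul_smul] using congrArg Subtype.val hz

theorem mulSub_eq_smul_top (m a : ℕ) : mulSub m a = (a : ℤ) • ⊤ := rfl

theorem le_mulSub_one {m : ℕ} (H : AddSubgroup (Fin m → ℤ)) : H ≤ mulSub m 1 := by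
  simp [mulSub_eq_smul_top]

theorem mulSub_index_le {m : ℕ} (H : AddSubgroup (Fin m → ℤ)) : mulSub m H.index ≤ H := by
  rintro _ ⟨z, -, rfl⟩
  simpa using H.nsmul_index_mem z

section Tower

variable {m : ℕ} {G : ℕ → AddSubgroup (Fin m → ℤ)}

theorem exists_le_mgen_of_le_towerRho {d : ℕ} (h : d ≤ towerRho G) (i : ℕ) :
    ∃ k ≥ i, d ≤ mgen (G i ⧸ (G k).addSubgroupOf (G i)) := by
  cases d with
  | zero => exact ⟨i, le_rfl, Nat.zero_le _⟩
  | succ d =>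
    have hR : d < towerR G i := h.trans (Nat.sInf_le ⟨i, rfl⟩)
    obtain ⟨_, ⟨j, rfl⟩, hj⟩ := exists_lt_of_lt_csSup' hR
    exact ⟨i + j, Nat.le_add_right i j, hj⟩

theorem exists_prime_le_smul_of_le_towerRho (hG : Antitone G) (hrho : m ≤ towerRho G) (i : ℕ) :
    ∃ k p : ℕ, p.Prime ∧ G k ≤ (p : ℤ) • G i := by
  obtain ⟨k, hik, hgen⟩ := exists_le_mgen_of_le_towerRho hrho i
  exact ⟨k, exists_prime_le_smul_of_finrank_le_mgen (hG hik) (by rwa [Module.finrank_fin_fun])⟩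

theorem exists_le_mulSub_of_le_towerRho (hG : Antitone G) (hrho : m ≤ towerRho G) (s : ℕ) :
    ∃ k a : ℕ, s < a ∧ G k ≤ mulSub m a := by
  induction s with
  | zero => exact ⟨0, 1, one_pos, le_mulSub_one _⟩
  | succ s ih =>
    obtain ⟨i, a, hsa, hi⟩ := ih
    obtain ⟨k, p, hp, hk⟩ := exists_prime_le_smul_of_le_towerRho hG hrho i
    refine ⟨k, p * a, by nlinarith [hp.two_le], ?_⟩
    calc G k ≤ (p : ℤ) • G i := hk
      _ ≤ (p : ℤ) • mulSub m a := AddSubgroup.map_mono hi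
      _ = mulSub m (p * a) := by
        rw [mulSub_eq_smul_top, mulSub_eq_smul_top, smul_smul, Nat.cast_mul]

end Tower

section Content

variable {m : ℕ} {H K : AddSubgroup (Fin m → ℤ)}

/-- The content of a subgroup `H` of `ℤᵐ`: the largest `a` with `H ⊆ a·ℤᵐ`. The supremum is
attained only if such `a` are bounded, as they are for `H` of finite index and `m ≠ 0`. -/
def content (H : AddSubgroup (Fin m → ℤ)) : ℕ :=
  sSup {a | H ≤ mulSub m a}

variable [NeZero m]

theorem dvd_index_of_le_mulSub {a : ℕ} (h : H ≤ mulSub m a) : a ∣ H.index := by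
  obtain ⟨z, -, hz⟩ := h (H.nsmul_index_mem 1)
  exact Int.natCast_dvd_natCast.mp ⟨z 0, by simpa using (congrFun hz 0).symm⟩

variable [H.FiniteIndex]

theorem le_index_of_le_mulSub {a : ℕ} (h : H ≤ mulSub m a) : a ≤ H.index :=
  Nat.le_of_dvd (Nat.pos_of_ne_zero AddSubgroup.FiniteIndex.index_ne_zero)
    (dvd_index_of_le_mulSub h)

theorem le_content {a : ℕ} (h : H ≤ mulSub m a) : a ≤ content H :=
  le_csSup ⟨H.index, fun _ => le_index_of_le_mulSub⟩ h

variable (H) in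
theorem one_le_content : 1 ≤ content H :=
  le_content (le_mulSub_one H)

variable (H) in
theorem le_mulSub_content : H ≤ mulSub m (content H) :=
  Nat.sSup_mem ⟨1, le_mulSub_one H⟩ ⟨H.index, fun _ => le_index_of_le_mulSub⟩

theorem content_anti (h : H ≤ K) : content K ≤ content H :=
  have : K.FiniteIndex := AddSubgroup.finiteIndex_of_le h
  le_content (h.trans (le_mulSub_content K))

end Content

/-- Let `𝔤 = {G = G_0 ⊇ G_1 ⊇ ⋯}` be a tower of finite-index subgroups of
`G = ℤⁿ⁺¹` with `ρ(𝔤) = n + 1`. Then there are sequences `a_k → ∞`, `b_k → ∞` of positive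
integers with `a_k·G ⊇ G_k ⊇ b_k·G` for all `k`. -/
theorem tower_squeeze_of_rho_full (n : ℕ) (G : ℕ → AddSubgroup (Fin (n + 1) → ℤ))
    (hG0 : G 0 = ⊤)
    (hdec : ∀ k, G (k + 1) ≤ G k)
    (hfin : ∀ k, (G k).FiniteIndex)
    (hrho : towerRho G = n + 1) :
    ∃ a b : ℕ → ℕ,
      (∀ k, 0 < a k) ∧ (∀ k, 0 < b k) ∧
      Filter.Tendsto a Filter.atTop Filter.atTop ∧
      Filter.Tendsto b Filter.atTop Filter.atTop ∧
      (∀ k, G k ≤ mulSub (n + 1) (a k)) ∧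
      (∀ k, mulSub (n + 1) (b k) ≤ G k) := by
  have hanti : Antitone G := antitone_nat_of_succ_le hdec
  have hcontent : Filter.Tendsto (fun k => content (G k)) Filter.atTop Filter.atTop := by
    refine Filter.tendsto_atTop_atTop_of_monotone (fun i j hij => content_anti (hanti hij))
      fun s => ?_
    obtain ⟨k, a, hsa, hk⟩ := exists_le_mulSub_of_le_towerRho hanti hrho.ge s
    exact ⟨k, hsa.le.trans (le_content hk)⟩
  have hcontent_le : ∀ k, content (G k) ≤ (G k).index :=
    fun k => le_index_of_le_mulSub (le_mulSub_content (G k))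
  exact ⟨fun k => content (G k), fun k => (G k).index,
    fun k => one_le_content (G k), fun k => (one_le_content (G k)).trans (hcontent_le k),
    hcontent, Filter.tendsto_atTop_mono hcontent_le hcontent,
    fun k => le_mulSub_content (G k), fun k => mulSub_index_le (G k)⟩

end
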